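/- Suppose for each t ∈ ℕ, ε(t) = R·sqrt(2·log(1/δ) + log(D(t))) where D : ℕ → ℝ is nondecreasing with D(t) ≥ 1, R > 0, δ ∈ (0,1), and suppose Δ > 0. Then the function t ↦ sqrt(D(t))·exp(-2·(ε(t) - Δ/2)²) is eventually bounded by sqrt(D(t))·exp(-2(R·sqrt(log D(t)) - Δ/2)²)·(1/δ^{4R²}) whenever ε(t) ≥ Δ/2; in particular, if R² > 1/4 and D(t) → ∞, then the bound tends to 0 as t → ∞. -/

import Mathlib

/-!
Write `a = ε t`, `b = R √(log (D t))`, `c = Δ / 2`. Since `1 / δ ^ (4 R²) = exp (4 R² log (1/δ))` and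
`a² - b² = 2 R² log (1/δ)`, the comparison of exponents amounts to `(a - b) (a + b - c) ≥ 0`, which
holds because `a ≥ b ≥ 0` and `a ≥ c`.

For the limit, put `s = √(log (D t)) → ∞`. As `√(D t) = exp (s² / 2)`, the total exponent is the
quadratic `s² / 2 - 2 (R s - c)²`, whose leading coefficient `1/2 - 2 R²` is negative when `R² > 1/4`.
-/

open Filter

lemma exponent_tendsto_atBot {R c : ℝ} (hR : 1 / 4 < R ^ 2) :
    Tendsto (fun s : ℝ => s ^ 2 / 2 + -2 * (R * s - c) ^ 2) atTop atBot := by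
  have h1 : Tendsto (fun s : ℝ => (2 * R ^ 2 - 1 / 2) * s - 4 * R * c) atTop atTop :=
    tendsto_atTop_add_const_right _ _ (tendsto_id.const_mul_atTop (by linarith))
  have h2 := tendsto_neg_atTop_atBot.comp
    (tendsto_atTop_add_const_right _ (2 * c ^ 2) (tendsto_id.atTop_mul_atTop₀ h1))
  refine h2.congr fun s => ?_
  simp only [Function.comp, id]
  ring

theorem misclustering_probability_decay
    (R δ Δ : ℝ) (hR : 0 < R) (hδ : δ ∈ Set.Ioo (0 : ℝ) 1) (hΔ : 0 < Δ)
    (D : ℕ → ℝ) (hD_mono : Monotone D) (hD_one : ∀ t, 1 ≤ D t)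
    (ε : ℕ → ℝ) (hε : ∀ t, ε t = R * Real.sqrt (2 * Real.log (1 / δ) + Real.log (D t))) :
    (∀ t, Δ / 2 ≤ ε t →
        Real.sqrt (D t) * Real.exp (-2 * (ε t - Δ / 2) ^ 2)
          ≤ Real.sqrt (D t)
              * Real.exp (-2 * (R * Real.sqrt (Real.log (D t)) - Δ / 2) ^ 2)
              * (1 / δ ^ (4 * R ^ 2)))
      ∧ (1 / 4 < R ^ 2 → Tendsto D atTop atTop →
          Tendsto (fun t =>
              Real.sqrt (D t)
                * Real.exp (-2 * (R * Real.sqrt (Real.log (D t)) - Δ / 2) ^ 2)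
                * (1 / δ ^ (4 * R ^ 2)))
            atTop (nhds 0)) := by
  have hlog : ∀ t, 0 ≤ Real.log (D t) := fun t => Real.log_nonneg (hD_one t)
  constructor
  · intro t ht
    have hL : 0 ≤ Real.log (1 / δ) :=
      Real.log_nonneg (by rw [le_div_iff₀ hδ.1]; linarith [hδ.2])
    have hpow : 1 / δ ^ (4 * R ^ 2) = Real.exp (4 * R ^ 2 * Real.log (1 / δ)) := by
      rw [Real.rpow_def_of_pos hδ.1, one_div, ← Real.exp_neg, one_div, Real.log_inv]
      congr 1
      ring
    rw [hpow, mul_assoc, ← Real.exp_add]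
    gcongr
    have hb : 0 ≤ R * √(Real.log (D t)) := by positivity
    have hab : R * √(Real.log (D t)) ≤ ε t := by
      rw [hε]
      gcongr
      linarith
    have ha2 : ε t ^ 2 = R ^ 2 * (2 * Real.log (1 / δ) + Real.log (D t)) := by
      rw [hε, mul_pow, Real.sq_sqrt (by linarith [hlog t])]
    have hb2 : (R * √(Real.log (D t))) ^ 2 = R ^ 2 * Real.log (D t) := by
      rw [mul_pow, Real.sq_sqrt (hlog t)]
    have key : 0 ≤ (ε t - R * √(Real.log (D t))) * (ε t + R * √(Real.log (D t)) - Δ / 2) :=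
      mul_nonneg (by linarith) (by linarith)
    linarith
  · intro hR4 hD
    have hs : Tendsto (fun t => √(Real.log (D t))) atTop atTop :=
      Real.tendsto_sqrt_atTop.comp (Real.tendsto_log_atTop.comp hD)
    have h := (Real.tendsto_exp_atBot.comp
      ((exponent_tendsto_atBot (c := Δ / 2) hR4).comp hs)).mul_const (1 / δ ^ (4 * R ^ 2))
    rw [zero_mul] at h
    refine h.congr fun t => ?_
    have hsqrt : √(D t) = Real.exp (√(Real.log (D t)) ^ 2 / 2) := by
      rw [Real.sq_sqrt (hlog t), Real.exp_half, Real.exp_log (by linarith [hD_one t])]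
    simp only [Function.comp]
    rw [Real.exp_add, ← hsqrt]
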